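/- Let (X,d) be a compact metric space, f: X → X a continuous map, and K ⊆ M_f(X) a closed subset. Let G^K = {x ∈ X : V_f(x) ∩ K ≠ ∅}. Then for every ε > 0, h_top^B(G^K,f,ε) ≤ sup_{μ∈K} inf_{ξ: diam ξ < ε} h_μ(f,ξ), where the infimum is over all finite measurable partitions ξ of X with diam ξ < ε. -/

import Mathlib

open MeasureTheory Filter Set Topology
open scoped ENNReal NNReal

noncomputable section

namespace MMD

variable {X : Type*}

/-! ### Bowen balls, Bowen topological entropy and metric mean dimension -/

/-- The Bowen ball `B_n(x,ε) = {y | d_n(x,y) < ε}` where `d_n` is the Bowen metric. -/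
def bowenBall [PseudoMetricSpace X] (f : X → X) (x : X) (n : ℕ) (ε : ℝ) : Set X :=
  {y | ∀ i < n, dist (f^[i] x) (f^[i] y) < ε}

/-- The weight sum `Σ_{(x,n) ∈ C} exp (-s n)` of a (countable) collection of Bowen balls,
encoded by its set of centers/lengths. -/
def coverSum (s : ℝ) (C : Set (X × ℕ)) : ℝ≥0∞ :=
  ∑' p : C, ENNReal.ofReal (Real.exp (-s * ((p : X × ℕ).2 : ℝ)))

/-- `m(Z,s,N,ε,f)`: infimum over countable (or finite) covers of `Z` by Bowen balls
`B_{n_i}(x_i,ε)` with `n_i ≥ N` of `Σ exp (-s n_i)`. -/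
def mB [PseudoMetricSpace X] (f : X → X) (Z : Set X) (s : ℝ) (N : ℕ) (ε : ℝ) : ℝ≥0∞ :=
  ⨅ (C : Set (X × ℕ)) (_ : C.Countable) (_ : ∀ p ∈ C, N ≤ p.2)
    (_ : Z ⊆ ⋃ p ∈ C, bowenBall f p.1 p.2 ε), coverSum s C

/-- `m(Z,s,ε) = lim_{N→∞} m(Z,s,N,ε,f)`; the limit of this monotone quantity is the sup. -/
def mBLim [PseudoMetricSpace X] (f : X → X) (Z : Set X) (s : ℝ) (ε : ℝ) : ℝ≥0∞ :=
  ⨆ N : ℕ, mB f Z s N ε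

/-- The Bowen topological entropy of `Z` at scale `ε`:
`h_top^B(Z,f,ε) = inf {s | m(Z,s,ε) = 0}`. -/
def hB [PseudoMetricSpace X] (f : X → X) (Z : Set X) (ε : ℝ) : ℝ :=
  sInf {s : ℝ | mBLim f Z s ε = 0}

/-- Upper Bowen metric mean dimension of `Z`. -/
def mdimUpper [PseudoMetricSpace X] (f : X → X) (Z : Set X) : ℝ :=
  limsup (fun ε : ℝ => hB f Z ε / |Real.log ε|) (𝓝[>] (0:ℝ))

/-- Lower Bowen metric mean dimension of `Z`. -/
def mdimLower [PseudoMetricSpace X] (f : X → X) (Z : Set X) : ℝ :=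
  liminf (fun ε : ℝ => hB f Z ε / |Real.log ε|) (𝓝[>] (0:ℝ))

/-! ### Finite measurable partitions and measure-theoretic entropy -/

/-- `P` is a finite measurable partition of `X` (mod `μ`): its elements are measurable,
they cover `X` up to a `μ`-null set, and they pairwise intersect in `μ`-null sets. -/
def IsPartition [MeasurableSpace X] (μ : Measure X) (P : Finset (Set X)) : Prop :=
  (∀ A ∈ P, MeasurableSet A) ∧ μ (Set.univ \ ⋃ A ∈ P, A) = 0 ∧
    ∀ A ∈ P, ∀ B ∈ P, A ≠ B → μ (A ∩ B) = 0

/-- Static entropy `H_μ(P) = -Σ_{A∈P} μ(A) log μ(A)`. -/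
def partEnt [MeasurableSpace X] (μ : Measure X) (P : Finset (Set X)) : ℝ :=
  ∑ A ∈ P, Real.negMulLog ((μ A).toReal)

/-- Join (common refinement) of two finite families of sets. -/
def joinParts (P Q : Finset (Set X)) : Finset (Set X) :=
  letI := Classical.decEq (Set X)
  (P ×ˢ Q).image fun p => p.1 ∩ p.2

/-- `dynJoin f P n = ⋁_{j=0}^{n-1} f^{-j} P`. -/
def dynJoin (f : X → X) (P : Finset (Set X)) : ℕ → Finset (Set X)
  | 0 => {Set.univ}
  | n + 1 =>
      letI := Classical.decEq (Set X)
      joinParts P ((dynJoin f P n).image fun A => f ⁻¹' A)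

/-- Measure-theoretic entropy of `f` w.r.t. the partition `P`:
`h_μ(f,P) = lim_n (1/n) H_μ(⋁_{j<n} f^{-j}P)` (the limit exists, hence equals the `limsup`). -/
def dynEnt [MeasurableSpace X] (μ : Measure X) (f : X → X) (P : Finset (Set X)) : ℝ :=
  limsup (fun n : ℕ => partEnt μ (dynJoin f P n) / n) atTop

/-- `diam P < ε`, i.e. every element of `P` has diameter `< ε`. -/
def partDiamLt [PseudoMetricSpace X] (P : Finset (Set X)) (ε : ℝ) : Prop :=
  ∀ A ∈ P, Metric.diam A < ε

/-- `inf_{ξ : diam ξ < ε} h_μ(f,ξ)`, the infimum over all finite measurable partitions of `X`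
with diameter `< ε`. -/
def infEnt [PseudoMetricSpace X] [MeasurableSpace X] (μ : Measure X) (f : X → X) (ε : ℝ) : ℝ :=
  sInf (dynEnt μ f '' {P : Finset (Set X) | IsPartition μ P ∧ partDiamLt P ε})

/-! ### Empirical measures, generic points and saturated sets -/

/-- The `n`-th empirical measure `E_n(x) = (1/n) Σ_{j<n} δ_{f^j x}` (defined as `E_1(x)`
for `n = 0`, a junk value). -/
def empMeasure [MeasurableSpace X] (f : X → X) (x : X) (n : ℕ) : Measure X :=
  ((max n 1 : ℕ) : ℝ≥0∞)⁻¹ • ∑ j ∈ Finset.range (max n 1), Measure.dirac (f^[j] x)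

instance [MeasurableSpace X] (f : X → X) (x : X) (n : ℕ) :
    IsProbabilityMeasure (empMeasure f x n) := by
  constructor
  have h1 : (0:ℕ) < max n 1 := lt_of_lt_of_le one_pos (le_max_right n 1)
  have hsum : (∑ j ∈ Finset.range (max n 1), Measure.dirac (f^[j] x)) Set.univ
      = ((max n 1 : ℕ) : ℝ≥0∞) := by
    rw [Measure.finset_sum_apply]
    simp
  simp only [empMeasure, Measure.smul_apply, smul_eq_mul, hsum]
  exact ENNReal.inv_mul_cancel (by exact_mod_cast h1.ne') (by simp)

/-- The `n`-th empirical measure as a probability measure. -/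
def empProb [MeasurableSpace X] (f : X → X) (x : X) (n : ℕ) : ProbabilityMeasure X :=
  ⟨empMeasure f x n, inferInstance⟩

/-- `V_f(x)`: the set of weak* limit points of the sequence of empirical measures of `x`. -/
def Vf [MetricSpace X] [MeasurableSpace X] [BorelSpace X] (f : X → X) (x : X) :
    Set (ProbabilityMeasure X) :=
  {ν | MapClusterPt ν atTop (empProb f x)}

/-- The saturated set `G_K = {x | V_f(x) = K}`. -/
def GK [MetricSpace X] [MeasurableSpace X] [BorelSpace X] (f : X → X)
    (K : Set (ProbabilityMeasure X)) : Set X :=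
  {x | Vf f x = K}

/-- The generic set `G_μ = {x | V_f(x) = {μ}}`. -/
def genSet [MetricSpace X] [MeasurableSpace X] [BorelSpace X] (f : X → X)
    (μ : ProbabilityMeasure X) : Set X :=
  GK f {μ}

/-! ### Invariant measures, supports, measure center, omega-limit sets -/

/-- `μ` is an `f`-invariant (Borel probability) measure. -/
def InvariantProb [MeasurableSpace X] (f : X → X) (μ : ProbabilityMeasure X) : Prop :=
  Measure.map f (μ : Measure X) = (μ : Measure X)

/-- The set `M_f(X)` of invariant probability measures. -/
def invSet [MeasurableSpace X] (f : X → X) : Set (ProbabilityMeasure X) :=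
  {μ | InvariantProb f μ}

/-- The support of a measure: points all of whose neighborhoods have positive measure. -/
def measSupport [TopologicalSpace X] [MeasurableSpace X] (μ : Measure X) : Set X :=
  {x | ∀ U ∈ 𝓝 x, 0 < μ U}

/-- The measure center `C_f(X) = closure (⋃_{μ ∈ M_f(X)} S_μ)`. -/
def measCenter [TopologicalSpace X] [MeasurableSpace X] (f : X → X) : Set X :=
  closure (⋃ μ ∈ invSet f, measSupport (μ : Measure X))

/-- The omega-limit set `ω_f(x) = ⋂_n closure {f^k x : k ≥ n}`. -/
def omegaSet [TopologicalSpace X] (f : X → X) (x : X) : Set X :=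
  ⋂ n : ℕ, closure {y | ∃ k, n ≤ k ∧ f^[k] x = y}

/-- The set of points whose omega-limit set contains the measure center. -/
def CtrSet [TopologicalSpace X] [MeasurableSpace X] (f : X → X) : Set X :=
  {x | measCenter f ⊆ omegaSet f x}

/-! ### Blow-up functions and the g-almost product property -/

/-- A blowup function: nondecreasing, unbounded, `g n < n` and `g n / n → 0`. -/
structure IsBlowup (g : ℕ → ℕ) : Prop where
  mono : Monotone g
  unbounded : ∀ C : ℕ, ∃ n, C < g n
  lt_self : ∀ n, 0 < n → g n < n
  ratio_tendsto_zero : Tendsto (fun n : ℕ => (g n : ℝ) / n) atTop (𝓝 0)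

/-- The g-blowup `B_n(g;x,ε)` of the Bowen ball `B_n(x,ε)`. -/
def blowupBall [PseudoMetricSpace X] (f : X → X) (g : ℕ → ℕ) (x : X) (n : ℕ) (ε : ℝ) :
    Set X :=
  {y | ∃ Λ : Finset ℕ, Λ ⊆ Finset.range n ∧
    letI := Classical.decEq ℕ
    (Finset.range n \ Λ).card ≤ g n ∧ ∀ j ∈ Λ, dist (f^[j] x) (f^[j] y) ≤ ε}

/-- The g-almost product property. -/
def GAlmostProduct [PseudoMetricSpace X] (f : X → X) (g : ℕ → ℕ) : Prop :=
  ∃ m : ℝ → ℕ, (∀ s t : ℝ, 0 < s → s ≤ t → m t ≤ m s) ∧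
    ∀ (k : ℕ) (x : ℕ → X) (ε : ℕ → ℝ) (n : ℕ → ℕ),
      (∀ j < k, 0 < ε j) → (∀ j < k, m (ε j) ≤ n j) →
      (⋂ j ∈ Finset.range k,
        (f^[∑ i ∈ Finset.range j, n i] ⁻¹' blowupBall f g (x j) (n j) (ε j))).Nonempty

/-! ### Separated sets and Pfister–Sullivan quantities -/

/-- The number of times `0 ≤ j < n` at which the orbits of `x` and `y` are `ε`-apart. -/
def sepCount [PseudoMetricSpace X] (f : X → X) (x y : X) (n : ℕ) (ε : ℝ) : ℕ :=
  letI := Classical.decPred fun j : ℕ => ε < dist (f^[j] x) (f^[j] y)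
  ((Finset.range n).filter fun j => ε < dist (f^[j] x) (f^[j] y)).card

/-- `N(F; δ, n, ε)`: maximal cardinality of a `(δ,n,ε)`-separated subset of
`X_{n,F} = {x | E_n(x) ∈ F}`. -/
def NsepD [MetricSpace X] [MeasurableSpace X] [BorelSpace X] (f : X → X)
    (F : Set (ProbabilityMeasure X)) (δ : ℝ) (n : ℕ) (ε : ℝ) : ℕ :=
  sSup {c : ℕ | ∃ E : Finset X, (↑E : Set X) ⊆ {x | empProb f x n ∈ F} ∧
    (∀ x ∈ E, ∀ y ∈ E, x ≠ y → δ * n ≤ (sepCount f x y n ε : ℝ)) ∧ E.card = c}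

/-- `N(F; n, ε)`: maximal cardinality of an `(n,ε)`-separated subset of `X_{n,F}`. -/
def NsepP [MetricSpace X] [MeasurableSpace X] [BorelSpace X] (f : X → X)
    (F : Set (ProbabilityMeasure X)) (n : ℕ) (ε : ℝ) : ℕ :=
  sSup {c : ℕ | ∃ E : Finset X, (↑E : Set X) ⊆ {x | empProb f x n ∈ F} ∧
    (∀ x ∈ E, ∀ y ∈ E, x ≠ y → ∃ i < n, ε < dist (f^[i] x) (f^[i] y)) ∧ E.card = c}

/-- `PS-bar(μ,δ,ε) = inf_{F ∋ μ} limsup_n (1/n) ln N(F;δ,n,ε)`. -/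
def PSbar [MetricSpace X] [MeasurableSpace X] [BorelSpace X] (f : X → X)
    (μ : ProbabilityMeasure X) (δ ε : ℝ) : ℝ :=
  sInf ((fun F => limsup (fun n : ℕ => Real.log (NsepD f F δ n ε) / n) atTop) ''
    {F : Set (ProbabilityMeasure X) | F ∈ 𝓝 μ})

/-! ### Convex combinations of probability measures -/

/-- The convex hull `cov{μ_1,…,μ_m}` of finitely many probability measures. -/
def convexCombos [MeasurableSpace X] {m : ℕ} (μ : Fin m → ProbabilityMeasure X) :
    Set (ProbabilityMeasure X) :=
  {ν | ∃ t : Fin m → ℝ≥0∞, (∑ i, t i) = 1 ∧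
    (ν : Measure X) = ∑ i, t i • (μ i : Measure X)}

/-- The convex combination `θ μ + (1-θ) ν` of two probability measures (with `θ`
clamped into `[0,1]`). -/
def mixP [MeasurableSpace X] (μ ν : ProbabilityMeasure X) (θ : ℝ) : ProbabilityMeasure X :=
  ⟨ENNReal.ofReal (min (max θ 0) 1) • (μ : Measure X)
      + ENNReal.ofReal (1 - min (max θ 0) 1) • (ν : Measure X), by
    constructor
    set t := min (max θ 0) 1 with ht
    have h0 : 0 ≤ t := le_min (le_max_right θ 0) zero_le_one
    have h1 : t ≤ 1 := min_le_right _ _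
    rw [Measure.add_apply, Measure.smul_apply, Measure.smul_apply, measure_univ, measure_univ,
      smul_eq_mul, smul_eq_mul, mul_one, mul_one, ← ENNReal.ofReal_add h0 (by linarith)]
    have : t + (1 - t) = 1 := by ring
    rw [this, ENNReal.ofReal_one]⟩

/-- Condition A.3: for invariant `μ, ν` with `α μ ≠ α ν`, the map
`θ ↦ α(θμ + (1-θ)ν)` is not constant on any nondegenerate subinterval of `[0,1]`. -/
def CondA3 [MeasurableSpace X] (f : X → X) (α : ProbabilityMeasure X → ℝ) : Prop :=
  ∀ μ ∈ invSet f, ∀ ν ∈ invSet f, α μ ≠ α ν →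
    ∀ a b : ℝ, 0 ≤ a → a < b → b ≤ 1 →
      ¬ (∀ s ∈ Set.Icc a b, ∀ t ∈ Set.Icc a b, α (mixP μ ν s) = α (mixP μ ν t))

end MMD

end

open MMD MeasureTheory Filter Set Topology
open scoped ENNReal NNReal

noncomputable section

/-!
Let `μ ∈ K` and `infEnt μ f ε < s`, and choose a partition `P` of diameter `< ε` and a length `n`
with `H_μ(⋁_{j<n} f^{-j} P) < n s`. Give a word `w` of length `n` over `P` the cost `-log μ [w]`,
truncated so that it is bounded; then `∑ exp (-cost)` is essentially at most `1`, and the mean cost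
under `μ` is at most the entropy of the `n`-th join. Shrinking the elements of `P` to disjoint
closed sets and fattening these to disjoint open sets, still of diameter `< ε`, makes the mean cost
upper semicontinuous at `μ`, so it stays below `n s` for all empirical measures in a
neighbourhood `F` of `μ`.

If `E_N(x) ∈ F`, then along one of the `n` residue classes mod `n` the consecutive `n`-blocks of
the orbit of `x` have total cost at most `N s`. There are at most `exp (N (s + θ))` such sequences
of blocks up to a constant factor, and points with the same blocks lie in a common Bowen ball.
By Borel–Cantelli the points with `E_N(x) ∈ F` for infinitely many `N` have Bowen entropy at most
`s`. As the space of probability measures is second countable, countably many such `F` cover `K`.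
-/

namespace MMD

open Function

variable {X ι : Type*}

section BowenEntropy

theorem coverSum_iUnion_le (s : ℝ) (C : ι → Set (X × ℕ)) :
    coverSum s (⋃ i, C i) ≤ ∑' i, coverSum s (C i) :=
  ENNReal.tsum_iUnion_le_tsum (fun p : X × ℕ => ENNReal.ofReal (Real.exp (-s * p.2))) C

theorem coverSum_prod_singleton (s : ℝ) (E : Finset X) (n : ℕ) :
    coverSum s ((E : Set X) ×ˢ {n}) = E.card * ENNReal.ofReal (Real.exp (-s * n)) := by
  have hlength (p : ((E : Set X) ×ˢ {n} : Set (X × ℕ))) : (p : X × ℕ).2 = n := p.2.2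
  simp only [coverSum, hlength, ENNReal.tsum_set_const]
  simp [Set.encard_prod]

theorem tsum_natCast_mul_exp_ne_top {c : ℕ → ℕ} {B r s : ℝ} (hr : r < s)
    (hc : ∀ n, (c n : ℝ) ≤ B * Real.exp (n * r)) :
    ∑' n, c n * ENNReal.ofReal (Real.exp (-s * n)) ≠ ∞ := by
  have hterm (n : ℕ) :
      c n * Real.exp (-s * n) ≤ B * Real.exp (r - s) ^ n := by
    calc c n * Real.exp (-s * n) ≤ B * Real.exp (n * r) * Real.exp (-s * n) := by
          gcongr; exact hc n
      _ = B * Real.exp (r - s) ^ n := by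
          rw [mul_assoc, ← Real.exp_add, ← Real.exp_nat_mul]; ring_nf
  have hsummable : Summable fun n => B * Real.exp (r - s) ^ n :=
    (summable_geometric_of_lt_one (Real.exp_nonneg _)
      (Real.exp_lt_one_iff.2 (sub_neg.2 hr))).mul_left B
  refine ne_top_of_le_ne_top hsummable.tsum_ofReal_ne_top (ENNReal.tsum_le_tsum fun n => ?_)
  rw [← ENNReal.ofReal_natCast, ← ENNReal.ofReal_mul (Nat.cast_nonneg _)]
  exact ENNReal.ofReal_le_ofReal (hterm n)

variable [PseudoMetricSpace X] {f : X → X} {Z : Set X} {s ε : ℝ} {N : ℕ}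

/-- `C` is a set of pairs (center, length) of the kind over which the infimum `mB f Z s N ε`
is taken. -/
structure IsBowenCover (f : X → X) (Z : Set X) (N : ℕ) (ε : ℝ) (C : Set (X × ℕ)) : Prop where
  countable : C.Countable
  le_length : ∀ p ∈ C, N ≤ p.2
  subset : Z ⊆ ⋃ p ∈ C, bowenBall f p.1 p.2 ε

theorem IsBowenCover.mB_le {C : Set (X × ℕ)} (hC : IsBowenCover f Z N ε C) :
    mB f Z s N ε ≤ coverSum s C :=
  iInf_le_of_le C <| iInf_le_of_le hC.countable <| iInf_le_of_le hC.le_length <|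
    iInf_le _ hC.subset

theorem IsBowenCover.iUnion [Countable ι] {Z : ι → Set X} {C : ι → Set (X × ℕ)}
    (hC : ∀ i, IsBowenCover f (Z i) N ε (C i)) : IsBowenCover f (⋃ i, Z i) N ε (⋃ i, C i) where
  countable := countable_iUnion fun i => (hC i).countable
  le_length p hp := by
    obtain ⟨i, hi⟩ := mem_iUnion.1 hp
    exact (hC i).le_length p hi
  subset := iUnion_subset fun i =>
    (hC i).subset.trans (biUnion_subset_biUnion_left (subset_iUnion C i))

theorem exists_isBowenCover_coverSum_lt {a : ℝ≥0∞} (h : mB f Z s N ε < a) :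
    ∃ C, IsBowenCover f Z N ε C ∧ coverSum s C < a := by
  simp only [mB, iInf_lt_iff] at h
  obtain ⟨C, hcountable, hlength, hsubset, hlt⟩ := h
  exact ⟨C, ⟨hcountable, hlength, hsubset⟩, hlt⟩

theorem mB_iUnion_le [Countable ι] (Z : ι → Set X) :
    mB f (⋃ i, Z i) s N ε ≤ ∑' i, mB f (Z i) s N ε := by
  refine ENNReal.le_of_forall_pos_le_add fun δ hδ hfinite => ?_
  obtain ⟨δ', hδ'pos, hδ'sum⟩ :=
    ENNReal.exists_pos_sum_of_countable' (ENNReal.coe_ne_zero.2 hδ.ne') ι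
  have hcover (i : ι) :
      ∃ C, IsBowenCover f (Z i) N ε C ∧ coverSum s C < mB f (Z i) s N ε + δ' i :=
    exists_isBowenCover_coverSum_lt <|
      ENNReal.lt_add_right (ENNReal.ne_top_of_tsum_ne_top hfinite.ne i) (hδ'pos i).ne'
  choose C hC hClt using hcover
  calc mB f (⋃ i, Z i) s N ε ≤ coverSum s (⋃ i, C i) := (IsBowenCover.iUnion hC).mB_le
    _ ≤ ∑' i, coverSum s (C i) := coverSum_iUnion_le s C
    _ ≤ ∑' i, (mB f (Z i) s N ε + δ' i) := ENNReal.tsum_le_tsum fun i => (hClt i).le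
    _ = ∑' i, mB f (Z i) s N ε + ∑' i, δ' i := ENNReal.tsum_add
    _ ≤ ∑' i, mB f (Z i) s N ε + δ := by gcongr

theorem mBLim_eq_zero_iff : mBLim f Z s ε = 0 ↔ ∀ N, mB f Z s N ε = 0 := ENNReal.iSup_eq_zero

theorem mBLim_eq_zero_of_subset_biUnion {t : Set ι} (ht : t.Countable) {Y : ι → Set X}
    (hY : ∀ i ∈ t, mBLim f (Y i) s ε = 0) (hZ : Z ⊆ ⋃ i ∈ t, Y i) : mBLim f Z s ε = 0 := by
  have := ht.to_subtype
  rw [biUnion_eq_iUnion] at hZ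
  refine mBLim_eq_zero_iff.2 fun N => le_antisymm ?_ zero_le
  calc mB f Z s N ε ≤ mB f (⋃ i : t, Y i) s N ε :=
        le_iInf₂ fun C hcountable => le_iInf₂ fun hlength hsubset =>
          IsBowenCover.mB_le ⟨hcountable, hlength, hZ.trans hsubset⟩
    _ ≤ ∑' i : t, mB f (Y i) s N ε := mB_iUnion_le _
    _ = 0 := by simp only [fun i : t => mBLim_eq_zero_iff.1 (hY i i.2) N, tsum_zero]

/-- `hB f Z ε` takes the junk value `0` if `mBLim f Z s ε` vanishes for arbitrarily small `s`. -/
theorem hB_le_of_forall_gt {h : ℝ} (hnonneg : 0 ≤ h) (hZ : ∀ s > h, mBLim f Z s ε = 0) :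
    hB f Z ε ≤ h := by
  by_cases hbdd : BddBelow {s : ℝ | mBLim f Z s ε = 0}
  · exact le_of_forall_gt_imp_ge_of_dense fun s hs => csInf_le hbdd (hZ s hs)
  · rwa [hB, Real.sInf_of_not_bddBelow hbdd]

/-- Borel–Cantelli: the balls of length at least `N` form a cover, with weight a tail of the
series. -/
theorem mBLim_eq_zero_of_frequently_mem_bowenBall {E : ℕ → Finset X}
    (hE : ∑' n, (E n).card * ENNReal.ofReal (Real.exp (-s * n)) ≠ ∞)
    (hZ : ∀ x ∈ Z, ∃ᶠ n in atTop, ∃ y ∈ E n, x ∈ bowenBall f y n ε) : mBLim f Z s ε = 0 := by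
  let tail (m : ℕ) : Set (X × ℕ) := ⋃ k, (E (k + m) : Set X) ×ˢ {k + m}
  have hcover {N m : ℕ} (hm : N ≤ m) : IsBowenCover f Z N ε (tail m) := by
    refine ⟨countable_iUnion fun k => (E _).countable_toSet.prod (countable_singleton _), ?_, ?_⟩
    · rintro ⟨x, n⟩ hp
      obtain ⟨k, -, rfl⟩ := mem_iUnion.1 hp
      exact hm.trans (Nat.le_add_left m k)
    · intro x hx
      obtain ⟨n, ⟨y, hy, hxy⟩, hn⟩ := ((hZ x hx).and_eventually (eventually_ge_atTop m)).exists
      obtain ⟨k, rfl⟩ := Nat.exists_eq_add_of_le' hn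
      exact mem_iUnion₂.2 ⟨(y, k + m), mem_iUnion.2 ⟨k, hy, rfl⟩, hxy⟩
  refine mBLim_eq_zero_iff.2 fun N => le_antisymm ?_ zero_le
  refine ge_of_tendsto (ENNReal.tendsto_sum_nat_add _ hE) ?_
  filter_upwards [eventually_ge_atTop N] with m hm
  calc mB f Z s N ε ≤ coverSum s (tail m) := (hcover hm).mB_le
    _ ≤ ∑' k, coverSum s ((E (k + m) : Set X) ×ˢ {k + m}) := coverSum_iUnion_le s _
    _ = _ := by simp only [coverSum_prod_singleton]

end BowenEntropy

section Cylinders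

/-- The cylinder of the word `w` in the family of sets `S`: the points whose first `n` iterates
visit `S (w 0), …, S (w (n - 1))` in this order. -/
def cylinder (f : X → X) (S : ι → Set X) {n : ℕ} (w : Fin n → ι) : Set X :=
  ⋂ j : Fin n, f^[j] ⁻¹' S (w j)

variable {f : X → X} {S T : ι → Set X} {n : ℕ}

theorem mem_cylinder {w : Fin n → ι} {x : X} :
    x ∈ cylinder f S w ↔ ∀ j : Fin n, f^[j] x ∈ S (w j) :=
  mem_iInter

theorem cylinder_mono (h : ∀ i, S i ⊆ T i) (w : Fin n → ι) : cylinder f S w ⊆ cylinder f T w :=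
  iInter_mono fun _ => preimage_mono (h _)

theorem cylinder_cons (f : X → X) (S : ι → Set X) (i : ι) (w : Fin n → ι) :
    cylinder f S (Fin.cons i w : Fin (n + 1) → ι) = S i ∩ f ⁻¹' cylinder f S w := by
  ext x
  simp [mem_cylinder, Fin.forall_fin_succ]

theorem isOpen_cylinder [TopologicalSpace X] (hf : Continuous f) (hS : ∀ i, IsOpen (S i))
    (w : Fin n → ι) : IsOpen (cylinder f S w) :=
  isOpen_iInter_of_finite fun j => (hS _).preimage (hf.iterate j)

theorem measurableSet_cylinder [MeasurableSpace X] (hf : Measurable f)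
    (hS : ∀ i, MeasurableSet (S i)) (w : Fin n → ι) : MeasurableSet (cylinder f S w) :=
  .iInter fun j => hf.iterate j (hS _)

theorem dynJoin_eq_image_cylinder [DecidableEq (Set X)] (f : X → X) (P : Finset (Set X)) (n : ℕ) :
    dynJoin f P n = Finset.univ.image fun w : Fin n → P => cylinder f (↑) w := by
  induction n with
  | zero => ext A; simp [dynJoin, cylinder]
  | succ n ih =>
    ext A
    simp only [dynJoin, joinParts, Finset.mem_image, Finset.mem_product, ih, Finset.mem_univ,
      true_and, Prod.exists]
    constructor
    · rintro ⟨B, -, ⟨hB, -, ⟨w, rfl⟩, rfl⟩, rfl⟩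
      exact ⟨Fin.cons ⟨B, hB⟩ w, cylinder_cons f _ ⟨B, hB⟩ w⟩
    · rintro ⟨w, rfl⟩
      refine ⟨w 0, _, ⟨(w 0).2, _, ⟨Fin.tail w, rfl⟩, rfl⟩, ?_⟩
      rw [← cylinder_cons, Fin.cons_self_tail]

variable [MeasurableSpace X] {μ : Measure X}

theorem aedisjoint_cylinder (hf : Measure.QuasiMeasurePreserving f μ μ)
    (hS : Pairwise (AEDisjoint μ on S)) :
    Pairwise (AEDisjoint μ on fun w : Fin n → ι => cylinder f S w) := by
  intro v w hvw
  obtain ⟨j, hj⟩ := Function.ne_iff.1 hvw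
  exact ((hS hj).preimage (hf.iterate j)).mono (iInter_subset _ j) (iInter_subset _ j)

theorem sum_measureReal_cylinder_le_one [Fintype ι] [IsProbabilityMeasure μ]
    (hf : Measure.QuasiMeasurePreserving f μ μ) (hS : ∀ i, MeasurableSet (S i))
    (hdisj : Pairwise (AEDisjoint μ on S)) :
    ∑ w : Fin n → ι, μ.real (cylinder f S w) ≤ 1 := by
  rw [← measureReal_biUnion_finset₀ ((aedisjoint_cylinder hf hdisj).set_pairwise _)
    fun w _ => (measurableSet_cylinder hf.measurable hS w).nullMeasurableSet]
  exact measureReal_le_one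

/-- Outside the cylinders, one of the first `n` iterates lies outside `⋃ i, S i`. -/
theorem one_sub_sum_measureReal_cylinder_le [Fintype ι] [IsProbabilityMeasure μ]
    (hf : MeasurePreserving f μ μ) (hS : ∀ i, MeasurableSet (S i)) (n : ℕ) :
    1 - ∑ w : Fin n → ι, μ.real (cylinder f S w) ≤ n * μ.real (⋃ i, S i)ᶜ := by
  have hcover : univ ⊆ (⋃ w : Fin n → ι, cylinder f S w) ∪
      ⋃ j : Fin n, f^[j] ⁻¹' (⋃ i, S i)ᶜ := by
    intro x _
    by_cases hx : ∀ j : Fin n, ∃ i, f^[j] x ∈ S i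
    · choose w hw using hx
      exact .inl (mem_iUnion.2 ⟨w, mem_cylinder.2 hw⟩)
    · exact .inr (by simpa using hx)
  have hpreimage (j : Fin n) : μ.real (f^[j] ⁻¹' (⋃ i, S i)ᶜ) = μ.real (⋃ i, S i)ᶜ :=
    (hf.iterate j).measureReal_preimage (MeasurableSet.iUnion hS).compl.nullMeasurableSet
  have hone : 1 ≤ ∑ w : Fin n → ι, μ.real (cylinder f S w) + n * μ.real (⋃ i, S i)ᶜ :=
    calc 1 = μ.real univ := probReal_univ.symm
      _ ≤ μ.real (⋃ w : Fin n → ι, cylinder f S w) + μ.real (⋃ j : Fin n, f^[j] ⁻¹' (⋃ i, S i)ᶜ) :=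
        (measureReal_mono hcover).trans (measureReal_union_le _ _)
      _ ≤ ∑ w : Fin n → ι, μ.real (cylinder f S w) + ∑ j : Fin n, μ.real (f^[j] ⁻¹' (⋃ i, S i)ᶜ) :=
        add_le_add (measureReal_iUnion_fintype_le _) (measureReal_iUnion_fintype_le _)
      _ = ∑ w : Fin n → ι, μ.real (cylinder f S w) + n * μ.real (⋃ i, S i)ᶜ := by
        simp only [hpreimage, Finset.sum_const, Finset.card_univ, Fintype.card_fin, nsmul_eq_mul]
  linarith

end Cylinders

section PartitionEntropy

variable [MeasurableSpace X] {μ : Measure X} {f : X → X} {P : Finset (Set X)}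

theorem IsPartition.measurableSet (hP : IsPartition μ P) (A : P) : MeasurableSet (A : Set X) :=
  hP.1 A A.2

theorem IsPartition.aedisjoint (hP : IsPartition μ P) :
    Pairwise (AEDisjoint μ on ((↑) : P → Set X)) :=
  fun A B hAB => hP.2.2 A A.2 B B.2 (Subtype.coe_ne_coe.2 hAB)

theorem IsPartition.measure_compl_iUnion (hP : IsPartition μ P) :
    μ (⋃ A : P, (A : Set X))ᶜ = 0 := by
  simpa [compl_eq_univ_sdiff, iUnion_subtype] using hP.2.1

theorem partEnt_dynJoin (hf : Measure.QuasiMeasurePreserving f μ μ) (hP : IsPartition μ P) (n : ℕ) :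
    partEnt μ (dynJoin f P n) = ∑ w : Fin n → P, Real.negMulLog (μ.real (cylinder f (↑) w)) := by
  classical
  rw [dynJoin_eq_image_cylinder]
  refine Finset.sum_image_of_pairwise_eq_zero fun v _ w _ hvw heq => ?_
  have hnull : μ (cylinder f (↑) v) = 0 := by
    simpa [AEDisjoint, onFun, ← heq] using aedisjoint_cylinder hf hP.aedisjoint hvw
  simp [hnull]

theorem partEnt_nonneg [IsProbabilityMeasure μ] (Q : Finset (Set X)) : 0 ≤ partEnt μ Q :=
  Finset.sum_nonneg fun _ _ => Real.negMulLog_nonneg measureReal_nonneg measureReal_le_one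

theorem sum_negMulLog_le_log_card_add_one [Fintype ι] {p : ι → ℝ} (hp : ∀ i, 0 ≤ p i)
    (hsum : ∑ i, p i ≤ 1) :
    ∑ i, Real.negMulLog (p i) ≤ Real.log (Fintype.card ι) + 1 := by
  cases isEmpty_or_nonempty ι
  · simp
  set a : ℝ := (Fintype.card ι : ℝ)
  have ha : 0 < a := Nat.cast_pos.2 Fintype.card_pos
  have hterm (i : ι) : Real.negMulLog (p i) ≤ p i * Real.log a + a⁻¹ := by
    have h := Real.negMulLog_le_one_sub_self (mul_nonneg ha.le (hp i))
    rw [Real.negMulLog_mul, Real.negMulLog] at h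
    refine le_of_mul_le_mul_left ?_ ha
    rw [mul_add, mul_inv_cancel₀ ha.ne']
    linarith [mul_nonneg ha.le (hp i)]
  calc ∑ i, Real.negMulLog (p i) ≤ ∑ i, (p i * Real.log a + a⁻¹) :=
        Finset.sum_le_sum fun i _ => hterm i
    _ = (∑ i, p i) * Real.log a + 1 := by
        simp [Finset.sum_add_distrib, Finset.sum_mul, a]
    _ ≤ Real.log a + 1 := by
        gcongr
        exact mul_le_of_le_one_left (Real.log_natCast_nonneg _) hsum

theorem partEnt_dynJoin_le [IsProbabilityMeasure μ] (hf : Measure.QuasiMeasurePreserving f μ μ)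
    (hP : IsPartition μ P) (n : ℕ) :
    partEnt μ (dynJoin f P n) ≤ n * Real.log P.card + 1 := by
  rw [partEnt_dynJoin hf hP]
  refine (sum_negMulLog_le_log_card_add_one (fun _ => measureReal_nonneg)
    (sum_measureReal_cylinder_le_one hf hP.measurableSet hP.aedisjoint)).trans_eq ?_
  simp [Real.log_pow]

theorem partEnt_dynJoin_div_nonneg [IsProbabilityMeasure μ] (f : X → X) (P : Finset (Set X))
    (n : ℕ) : 0 ≤ partEnt μ (dynJoin f P n) / n :=
  div_nonneg (partEnt_nonneg _) n.cast_nonneg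

theorem partEnt_dynJoin_div_le [IsProbabilityMeasure μ] (hf : Measure.QuasiMeasurePreserving f μ μ)
    (hP : IsPartition μ P) (n : ℕ) :
    partEnt μ (dynJoin f P n) / n ≤ Real.log P.card + 1 := by
  obtain rfl | hn := n.eq_zero_or_pos
  · simpa using add_nonneg (Real.log_natCast_nonneg _) zero_le_one
  · rw [div_le_iff₀ (Nat.cast_pos.2 hn)]
    have : (1 : ℝ) ≤ n := Nat.one_le_cast.2 hn
    linarith [partEnt_dynJoin_le hf hP n]

theorem isBoundedUnder_partEnt_dynJoin_div [IsProbabilityMeasure μ]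
    (hf : Measure.QuasiMeasurePreserving f μ μ) (hP : IsPartition μ P) :
    IsBoundedUnder (· ≤ ·) atTop fun n : ℕ => partEnt μ (dynJoin f P n) / n :=
  isBoundedUnder_of ⟨_, partEnt_dynJoin_div_le hf hP⟩

theorem dynEnt_nonneg [IsProbabilityMeasure μ] (hf : Measure.QuasiMeasurePreserving f μ μ)
    (hP : IsPartition μ P) : 0 ≤ dynEnt μ f P :=
  le_limsup_of_frequently_le (Frequently.of_forall (partEnt_dynJoin_div_nonneg f P))
    (isBoundedUnder_partEnt_dynJoin_div hf hP)

theorem dynEnt_le [IsProbabilityMeasure μ] (hf : Measure.QuasiMeasurePreserving f μ μ)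
    (hP : IsPartition μ P) : dynEnt μ f P ≤ Real.log P.card + 1 :=
  limsup_le_of_le
    (isBoundedUnder_of ⟨0, partEnt_dynJoin_div_nonneg f P⟩ :
      IsBoundedUnder (· ≥ ·) atTop _).isCoboundedUnder_le
    (Eventually.of_forall (partEnt_dynJoin_div_le hf hP))

theorem exists_partEnt_dynJoin_lt_of_dynEnt_lt [IsProbabilityMeasure μ]
    (hf : Measure.QuasiMeasurePreserving f μ μ) (hP : IsPartition μ P) {s : ℝ}
    (h : dynEnt μ f P < s) : ∃ n > 0, partEnt μ (dynJoin f P n) < n * s := by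
  have hlt := eventually_lt_of_limsup_lt h (isBoundedUnder_partEnt_dynJoin_div hf hP)
  obtain ⟨n, hn, hpos⟩ := (hlt.and (eventually_gt_atTop 0)).exists
  exact ⟨n, hpos, (div_lt_iff₀' (Nat.cast_pos.2 hpos)).1 hn⟩

theorem infEnt_nonneg [PseudoMetricSpace X] [IsProbabilityMeasure μ]
    (hf : Measure.QuasiMeasurePreserving f μ μ) (ε : ℝ) : 0 ≤ infEnt μ f ε :=
  Real.sInf_nonneg <| forall_mem_image.2 fun _ hP => dynEnt_nonneg hf hP.1

theorem infEnt_le_dynEnt [PseudoMetricSpace X] [IsProbabilityMeasure μ]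
    (hf : Measure.QuasiMeasurePreserving f μ μ) {ε : ℝ} (hP : IsPartition μ P)
    (hdiam : partDiamLt P ε) : infEnt μ f ε ≤ dynEnt μ f P :=
  csInf_le ⟨0, forall_mem_image.2 fun _ hQ => dynEnt_nonneg hf hQ.1⟩ ⟨P, ⟨hP, hdiam⟩, rfl⟩

end PartitionEntropy

section FineLabelling

variable [PseudoMetricSpace X]

/-- A map that takes equal values only at points less than `ε` apart. Its fibres are the pieces
into which we cut `X`. -/
def IsFineLabelling (ε : ℝ) (l : X → ι) : Prop :=
  ∀ ⦃x y⦄, l x = l y → dist x y < ε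

variable [CompactSpace X] [MeasurableSpace X] {ε : ℝ}

theorem exists_simpleFunc_isFineLabelling [OpensMeasurableSpace X] (hε : 0 < ε) :
    ∃ k : SimpleFunc X X, IsFineLabelling ε k := by
  cases isEmpty_or_nonempty X
  · exact ⟨.ofIsEmpty, isEmptyElim⟩
  let e := TopologicalSpace.denseSeq X
  obtain ⟨N, hN⟩ : ∃ N, univ ⊆ ⋃ k ≤ N, Metric.ball (e k) (ε / 2) := by
    refine isCompact_univ.elim_directed_cover _
      (fun N => isOpen_biUnion fun k _ => Metric.isOpen_ball) (fun x _ => ?_)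
      (Monotone.directed_le fun M N h => biUnion_subset_biUnion_left fun k hk => le_trans hk h)
    obtain ⟨k, hk⟩ := (TopologicalSpace.denseRange_denseSeq X).exists_dist_lt x (half_pos hε)
    exact mem_iUnion.2 ⟨k, mem_iUnion₂.2 ⟨k, le_rfl, hk⟩⟩
  have hdist (x : X) : dist (SimpleFunc.nearestPt e N x) x < ε / 2 := by
    obtain ⟨k, hk, hx⟩ := mem_iUnion₂.1 (hN (mem_univ x))
    have := SimpleFunc.edist_nearestPt_le e x hk
    rw [edist_dist, edist_dist, ENNReal.ofReal_le_ofReal_iff dist_nonneg] at this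
    exact this.trans_lt (Metric.mem_ball'.1 hx)
  refine ⟨SimpleFunc.nearestPt e N, fun x y hxy => ?_⟩
  have hy := hdist y
  rw [← hxy] at hy
  linarith [dist_triangle_left x y (SimpleFunc.nearestPt e N x), hdist x]

theorem exists_isPartition_partDiamLt [OpensMeasurableSpace X] (hε : 0 < ε) :
    ∃ P : Finset (Set X), partDiamLt P ε ∧ ∀ μ : Measure X, IsPartition μ P := by
  classical
  obtain ⟨k, hk⟩ := exists_simpleFunc_isFineLabelling (X := X) (half_pos hε)
  refine ⟨k.range.image fun y => k ⁻¹' {y}, ?_, fun μ => ⟨?_, ?_, ?_⟩⟩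
  · refine Finset.forall_mem_image.2 fun y _ => ?_
    refine (Metric.diam_le_of_forall_dist_le (half_pos hε).le ?_).trans_lt (half_lt_self hε)
    exact fun x hx x' hx' => (hk (hx.trans hx'.symm)).le
  · exact Finset.forall_mem_image.2 fun y _ => k.measurableSet_fiber y
  · rw [sdiff_eq_empty.2 fun x _ => ?_, measure_empty]
    exact mem_iUnion₂.2 ⟨_, Finset.mem_image_of_mem _ (k.mem_range_self x), rfl⟩
  · refine Finset.forall_mem_image.2 fun y _ => Finset.forall_mem_image.2 fun y' _ hne => ?_
    rw [← preimage_inter, singleton_inter_eq_empty.2 fun h => hne (by rw [h]), preimage_empty,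
      measure_empty]

theorem exists_dynEnt_lt_of_infEnt_lt [OpensMeasurableSpace X] {μ : Measure X} {f : X → X}
    (hε : 0 < ε) {s : ℝ} (h : infEnt μ f ε < s) :
    ∃ P : Finset (Set X), IsPartition μ P ∧ partDiamLt P ε ∧ dynEnt μ f P < s := by
  obtain ⟨P₀, hdiam, hP₀⟩ := exists_isPartition_partDiamLt (X := X) hε
  have hne : {P : Finset (Set X) | IsPartition μ P ∧ partDiamLt P ε}.Nonempty :=
    ⟨P₀, hP₀ μ, hdiam⟩
  obtain ⟨-, ⟨P, ⟨hP, hPε⟩, rfl⟩, hlt⟩ := exists_lt_of_csInf_lt (hne.image _) h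
  exact ⟨P, hP, hPε, hlt⟩

theorem bddAbove_infEnt [OpensMeasurableSpace X] {f : X → X} (hf : Measurable f)
    {K : Set (ProbabilityMeasure X)} (hK : K ⊆ invSet f) (hε : 0 < ε) :
    BddAbove ((fun ν : ProbabilityMeasure X => infEnt (ν : Measure X) f ε) '' K) := by
  obtain ⟨P, hdiam, hP⟩ := exists_isPartition_partDiamLt (X := X) hε
  refine ⟨Real.log P.card + 1, forall_mem_image.2 fun μ hμ => ?_⟩
  have hfμ : Measure.QuasiMeasurePreserving f (μ : Measure X) μ :=
    ⟨hf, (hK hμ).absolutelyContinuous⟩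
  exact (infEnt_le_dynEnt hfμ (hP μ) hdiam).trans (dynEnt_le hfμ (hP μ))

end FineLabelling

section Counting

/-- Each word of cost at most `a` contributes at least `exp (-a)` to
`(∑ v, exp (-c v)) ^ m ≤ exp (m * θ)`. -/
theorem card_filter_sum_le_le_exp [Fintype ι] {c : ι → ℝ} {θ : ℝ}
    (hc : ∑ v, Real.exp (-c v) ≤ Real.exp θ) (m : ℕ) (a : ℝ) :
    (Finset.card {b : Fin m → ι | ∑ i, c (b i) ≤ a} : ℝ) ≤ Real.exp (m * θ + a) := by
  have hone (b : Fin m → ι) (hb : ∑ i, c (b i) ≤ a) :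
      1 ≤ Real.exp a * ∏ i, Real.exp (-c (b i)) := by
    rw [← Real.exp_sum, ← Real.exp_add, Finset.sum_neg_distrib]
    exact Real.one_le_exp (by linarith)
  calc (Finset.card {b : Fin m → ι | ∑ i, c (b i) ≤ a} : ℝ)
      = ∑ b : Fin m → ι with ∑ i, c (b i) ≤ a, (1 : ℝ) := by simp
    _ ≤ ∑ b : Fin m → ι with ∑ i, c (b i) ≤ a, Real.exp a * ∏ i, Real.exp (-c (b i)) :=
        Finset.sum_le_sum fun b hb => hone b (Finset.mem_filter_univ b |>.1 hb)
    _ ≤ ∑ b : Fin m → ι, Real.exp a * ∏ i, Real.exp (-c (b i)) :=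
        Finset.sum_le_sum_of_subset_of_nonneg (Finset.filter_subset _ _)
          fun _ _ _ => by positivity
    _ = Real.exp a * (∑ v, Real.exp (-c v)) ^ m := by rw [Fintype.sum_pow, Finset.mul_sum]
    _ ≤ Real.exp a * Real.exp θ ^ m := by gcongr
    _ = Real.exp (m * θ + a) := by rw [← Real.exp_nat_mul, ← Real.exp_add, add_comm]

theorem sum_range_sum_range_add_mul {M : Type*} [AddCommMonoid M] (g : ℕ → M) (n m : ℕ) :
    ∑ r ∈ Finset.range n, ∑ i ∈ Finset.range m, g (r + i * n) =
      ∑ j ∈ Finset.range (m * n), g j := by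
  induction m with
  | zero => simp
  | succ m ih =>
    rw [Nat.succ_mul, Finset.sum_range_add, ← ih]
    simp only [Finset.sum_range_succ, Finset.sum_add_distrib, add_comm (m * n)]

theorem exists_shift_sum_le {g : ℕ → ℝ} (hg : ∀ j, 0 ≤ g j) {n N : ℕ} (hn : 0 < n) {a : ℝ}
    (h : ∑ j ∈ Finset.range N, g j ≤ n * a) :
    ∃ r < n, ∑ i ∈ Finset.range (N / n), g (r + i * n) ≤ a := by
  have hsum : ∑ r ∈ Finset.range n, ∑ i ∈ Finset.range (N / n), g (r + i * n) ≤
      ∑ _r ∈ Finset.range n, a :=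
    calc _ = ∑ j ∈ Finset.range (N / n * n), g j := sum_range_sum_range_add_mul g n _
      _ ≤ ∑ j ∈ Finset.range N, g j :=
        Finset.sum_le_sum_of_subset_of_nonneg
          (Finset.range_mono (Nat.div_mul_le_self N n)) fun j _ _ => hg j
      _ ≤ ∑ _r ∈ Finset.range n, a := by simpa using h
  simpa using Finset.exists_le_of_sum_le (Finset.nonempty_range_iff.2 hn.ne') hsum

theorem exists_finset_representatives {τ : Type*} (φ : X → τ) (T : Finset τ) :
    ∃ E : Finset X, E.card ≤ T.card ∧ ∀ x, φ x ∈ T → ∃ y ∈ E, φ y = φ x := by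
  classical
  cases isEmpty_or_nonempty X
  · exact ⟨∅, by simp, isEmptyElim⟩
  · exact ⟨T.image (invFun φ), Finset.card_image_le, fun x hx =>
      ⟨_, Finset.mem_image_of_mem _ hx, invFun_eq ⟨x, rfl⟩⟩⟩

end Counting

section Coding

variable {f : X → X} {l : X → ι} {ε : ℝ} {n N : ℕ}

/-- The word of length `n` read off by the labelling `l` along the orbit of `x`. -/
def itinerary (f : X → X) (l : X → ι) (n : ℕ) (x : X) : Fin n → ι :=
  fun i => l (f^[i] x)

theorem label_iterate_add_eq {x y : X} {j i : ℕ} (hi : i < n)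
    (h : itinerary f l n (f^[j] x) = itinerary f l n (f^[j] y)) :
    l (f^[i + j] x) = l (f^[i + j] y) := by
  simpa only [itinerary, ← iterate_add_apply] using congrFun h ⟨i, hi⟩

variable [PseudoMetricSpace X]

theorem mem_bowenBall_of_itinerary_eq (hl : IsFineLabelling ε l) (hn : 0 < n) {x y : X} {r : ℕ}
    (hr : r ≤ n) (hfirst : itinerary f l n y = itinerary f l n x)
    (hblocks : ∀ i ≤ N / n,
      itinerary f l n (f^[r + i * n] y) = itinerary f l n (f^[r + i * n] x)) :
    x ∈ bowenBall f y N ε := by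
  intro j hj
  apply hl
  rcases lt_or_ge j n with hjn | hjn
  · exact label_iterate_add_eq (j := 0) hjn hfirst
  · have hsplit : (j - r) % n + (r + (j - r) / n * n) = j := by
      have := Nat.mod_add_div' (j - r) n
      omega
    rw [← hsplit]
    exact label_iterate_add_eq (Nat.mod_lt _ hn)
      (hblocks _ (Nat.div_le_div_right ((Nat.sub_le j r).trans hj.le)))

variable [Fintype ι] {c : (Fin n → ι) → ℝ} {θ : ℝ}

/-- A point is coded by its first block and by its blocks at the times `r + i * n`, `i ≤ N / n`.
Those with `i < N / n` are counted through their cost, the two others contribute the factor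
`card (Fin n → ι) ^ 2`. -/
theorem exists_finset_bowenBall_cover_of_shift (hl : IsFineLabelling ε l) (hn : 0 < n)
    (hc : ∑ w, Real.exp (-c w) ≤ Real.exp θ) {r : ℕ} (hr : r ≤ n) (N : ℕ) (a : ℝ) :
    ∃ E : Finset X,
      (E.card : ℝ) ≤ Fintype.card (Fin n → ι) ^ 2 * Real.exp ((N / n : ℕ) * θ + a) ∧
      ∀ x, ∑ i ∈ Finset.range (N / n), c (itinerary f l n (f^[r + i * n] x)) ≤ a →
        ∃ y ∈ E, x ∈ bowenBall f y N ε := by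
  classical
  let m := N / n
  let block (x : X) (i : ℕ) := itinerary f l n (f^[r + i * n] x)
  let T : Finset ((Fin n → ι) × (Fin n → ι) × (Fin m → Fin n → ι)) :=
    Finset.univ ×ˢ Finset.univ ×ˢ ({b | ∑ i, c (b i) ≤ a} : Finset (Fin m → Fin n → ι))
  obtain ⟨E, hcard, hE⟩ := exists_finset_representatives
    (fun x => (itinerary f l n x, block x m, fun i : Fin m => block x i)) T
  refine ⟨E, ?_, fun x hx => ?_⟩
  · calc (E.card : ℝ) ≤ T.card := Nat.cast_le.2 hcard
      _ = Fintype.card (Fin n → ι) ^ 2 *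
          (Finset.card {b : Fin m → Fin n → ι | ∑ i, c (b i) ≤ a} : ℝ) := by
        simp only [T, Finset.card_product, Finset.card_univ, Nat.cast_mul]
        ring
      _ ≤ Fintype.card (Fin n → ι) ^ 2 * Real.exp (m * θ + a) := by
        gcongr
        exact card_filter_sum_le_le_exp hc m a
  · rw [Finset.sum_range] at hx
    obtain ⟨y, hy, hxy⟩ := hE x (by simpa [T] using hx)
    simp only [Prod.mk.injEq] at hxy
    obtain ⟨hfirst, hlast, hmiddle⟩ := hxy
    refine ⟨y, hy, mem_bowenBall_of_itinerary_eq hl hn hr hfirst fun i hi => ?_⟩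
    rcases hi.lt_or_eq with hlt | rfl
    · exact congrFun hmiddle ⟨i, hlt⟩
    · exact hlast

theorem exists_finset_bowenBall_cover (hl : IsFineLabelling ε l) (hn : 0 < n)
    (hc : ∑ w, Real.exp (-c w) ≤ Real.exp θ) (hc_nonneg : ∀ w, 0 ≤ c w) (hθ : 0 ≤ θ)
    (N : ℕ) (s : ℝ) :
    ∃ E : Finset X,
      (E.card : ℝ) ≤ n * Fintype.card (Fin n → ι) ^ 2 * Real.exp (N * (s + θ)) ∧
      ∀ x, ∑ j ∈ Finset.range N, c (itinerary f l n (f^[j] x)) ≤ N * (n * s) →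
        ∃ y ∈ E, x ∈ bowenBall f y N ε := by
  classical
  have hshift (r : Fin n) :=
    exists_finset_bowenBall_cover_of_shift (f := f) hl hn hc r.2.le N (N * s)
  choose E hcard hE using hshift
  refine ⟨Finset.univ.biUnion E, ?_, fun x hx => ?_⟩
  · have hexp : (N / n : ℕ) * θ + N * s ≤ N * (s + θ) := by
      have : ((N / n : ℕ) : ℝ) * θ ≤ N * θ := by gcongr; exact Nat.div_le_self N n
      linarith
    calc ((Finset.univ.biUnion E).card : ℝ) ≤ ∑ r, ((E r).card : ℝ) := by
          exact_mod_cast Finset.card_biUnion_le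
      _ ≤ ∑ _r : Fin n, Fintype.card (Fin n → ι) ^ 2 * Real.exp (N * (s + θ)) :=
          Finset.sum_le_sum fun r _ => (hcard r).trans (by gcongr)
      _ = n * Fintype.card (Fin n → ι) ^ 2 * Real.exp (N * (s + θ)) := by simp [mul_assoc]
  · obtain ⟨r, hr, hsum⟩ := exists_shift_sum_le (fun j => hc_nonneg _) hn
      (hx.trans_eq (mul_left_comm _ _ _))
    obtain ⟨y, hy, hxy⟩ := hE ⟨r, hr⟩ x hsum
    exact ⟨y, Finset.mem_biUnion.2 ⟨⟨r, hr⟩, Finset.mem_univ _, hy⟩, hxy⟩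

end Coding

section Approximation

theorem exists_isClosed_pairwise_disjoint_measure_compl_iUnion_lt [TopologicalSpace X]
    [MeasurableSpace X] [OpensMeasurableSpace X] {μ : Measure X} [IsFiniteMeasure μ]
    [μ.WeaklyRegular] [Countable ι] {S : ι → Set X} (hS : ∀ i, MeasurableSet (S i))
    (hdisj : Pairwise (AEDisjoint μ on S)) (hcover : μ (⋃ i, S i)ᶜ = 0) {τ : ℝ≥0∞} (hτ : τ ≠ 0) :
    ∃ C : ι → Set X, (∀ i, IsClosed (C i)) ∧ (∀ i, C i ⊆ S i) ∧ Pairwise (Disjoint on C) ∧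
      μ (⋃ i, C i)ᶜ < τ := by
  obtain ⟨t, ht, ht_null, ht_disj⟩ := exists_null_pairwise_disjoint_sdiff hdisj
  obtain ⟨δ, hδ, hδτ⟩ := ENNReal.exists_pos_sum_of_countable' hτ ι
  choose C hCS hC hCδ using fun i =>
    ((hS i).diff (ht i)).exists_isClosed_sdiff_lt (measure_ne_top μ _) (hδ i).ne'
  refine ⟨C, hC, fun i => (hCS i).trans sdiff_subset,
    ht_disj.mono fun i j h => h.mono (hCS i) (hCS j), lt_of_le_of_lt ?_ hδτ⟩
  have hsub : (⋃ i, C i)ᶜ ⊆ (⋃ i, S i)ᶜ ∪ ⋃ i, (t i ∪ (S i \ t i) \ C i) := by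
    intro x hx
    simp only [mem_compl_iff, mem_union, mem_iUnion, Set.mem_sdiff] at hx ⊢
    grind
  calc μ (⋃ i, C i)ᶜ ≤ μ (⋃ i, S i)ᶜ + ∑' i, (μ (t i) + μ ((S i \ t i) \ C i)) :=
        (measure_mono hsub).trans <| (measure_union_le _ _).trans <| add_le_add_right
          ((measure_iUnion_le _).trans (ENNReal.tsum_le_tsum fun i => measure_union_le _ _)) _
    _ = ∑' i, μ ((S i \ t i) \ C i) := by simp only [hcover, ht_null, zero_add]
    _ ≤ ∑' i, δ i := ENNReal.tsum_le_tsum fun i => (hCδ i).le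

variable [PseudoMetricSpace X] {ε : ℝ}

theorem exists_isOpen_pairwise_disjoint_dist_lt [BoundedSpace X] [Finite ι] {C : ι → Set X}
    (hC : ∀ i, IsClosed (C i)) (hdisj : Pairwise (Disjoint on C))
    (hdiam : ∀ i, Metric.diam (C i) < ε) :
    ∃ U : ι → Set X, (∀ i, IsOpen (U i)) ∧ (∀ i, C i ⊆ U i) ∧ Pairwise (Disjoint on U) ∧
      ∀ i, ∀ x ∈ U i, ∀ y ∈ U i, dist x y < ε := by
  obtain ⟨V, hV, hVdisj⟩ := Pairwise.exists_mem_filter_basis_of_disjoint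
    (fun i j hij => disjoint_nhdsSet_nhdsSet (hC i) (hC j) (hdisj hij))
    fun i => hasBasis_nhdsSet (C i)
  let δ (i : ι) : ℝ := (ε - Metric.diam (C i)) / 3
  have hδ (i : ι) : 0 < δ i := div_pos (sub_pos.2 (hdiam i)) three_pos
  refine ⟨fun i => V i ∩ Metric.thickening (δ i) (C i),
    fun i => (hV i).1.inter Metric.isOpen_thickening,
    fun i => subset_inter (hV i).2 (Metric.self_subset_thickening (hδ i) _),
    hVdisj.mono fun i j h => h.mono inter_subset_left inter_subset_left,
    fun i x hx y hy => ?_⟩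
  calc dist x y ≤ Metric.diam (Metric.thickening (δ i) (C i)) :=
        Metric.dist_le_diam_of_mem (.all _) hx.2 hy.2
    _ ≤ Metric.diam (C i) + 2 * δ i := Metric.diam_thickening_le _ (hδ i).le
    _ < ε := by linarith [hdiam i, show δ i = (ε - Metric.diam (C i)) / 3 from rfl]

theorem exists_isFineLabelling_sum {κ : Type*} {U : ι → Set X} (hdisj : Pairwise (Disjoint on U))
    (hU : ∀ i, ∀ x ∈ U i, ∀ y ∈ U i, dist x y < ε) {k : X → κ} (hk : IsFineLabelling ε k) :
    ∃ l : X → ι ⊕ κ, IsFineLabelling ε l ∧ ∀ i, ∀ x ∈ U i, l x = .inl i := by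
  classical
  let l (x : X) : ι ⊕ κ := if h : ∃ i, x ∈ U i then .inl h.choose else .inr (k x)
  have hl_inl {x : X} (h : ∃ i, x ∈ U i) : l x = .inl h.choose := dif_pos h
  have hl_inr {x : X} (h : ¬∃ i, x ∈ U i) : l x = .inr (k x) := dif_neg h
  refine ⟨l, fun x y hxy => ?_, fun i x hx => ?_⟩
  · by_cases hx : ∃ i, x ∈ U i <;> by_cases hy : ∃ i, y ∈ U i
    · rw [hl_inl hx, hl_inl hy, Sum.inl.injEq] at hxy
      exact hU _ x hx.choose_spec y (hxy ▸ hy.choose_spec)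
    · simp [hl_inl hx, hl_inr hy] at hxy
    · simp [hl_inr hx, hl_inl hy] at hxy
    · rw [hl_inr hx, hl_inr hy, Sum.inr.injEq] at hxy
      exact hk hxy
  · have h : ∃ i, x ∈ U i := ⟨i, hx⟩
    rw [hl_inl h, hdisj.eq (not_disjoint_iff.2 ⟨x, h.choose_spec, hx⟩)]

end Approximation

section TruncatedInformation

/-- The information content `-log p` of an event of probability `p`, truncated at `-log η` so that
it stays bounded. -/
def truncInfo (η p : ℝ) : ℝ :=
  -Real.log (max p η)

variable {η p : ℝ}

theorem truncInfo_nonneg (hη : 0 < η) (hη1 : η ≤ 1) (hp : p ≤ 1) : 0 ≤ truncInfo η p :=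
  neg_nonneg.2 (Real.log_nonpos (hη.le.trans (le_max_right _ _)) (max_le hp hη1))

theorem truncInfo_le (hη : 0 < η) (p : ℝ) : truncInfo η p ≤ -Real.log η :=
  neg_le_neg (Real.log_le_log hη (le_max_right _ _))

theorem truncInfo_mul_le_negMulLog (hp : 0 ≤ p) (η : ℝ) : truncInfo η p * p ≤ Real.negMulLog p := by
  rcases hp.eq_or_lt with rfl | hpos
  · simp
  · have hlog : Real.log p ≤ Real.log (max p η) := Real.log_le_log hpos (le_max_left _ _)
    rw [Real.negMulLog_eq_neg, truncInfo, neg_mul, neg_le_neg_iff, mul_comm]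
    gcongr

theorem exp_neg_truncInfo_le (hη : 0 < η) (hp : 0 ≤ p) : Real.exp (-truncInfo η p) ≤ p + η := by
  rw [truncInfo, neg_neg, Real.exp_log (lt_max_of_lt_right hη)]
  exact max_le_add_of_nonneg hp hη.le

theorem sum_exp_neg_truncInfo_le [Fintype ι] {p : ι → ℝ} {θ : ℝ} (hp : ∀ i, 0 ≤ p i)
    (hsum : ∑ i, p i ≤ 1) (hη : 0 < η) (hηθ : Fintype.card ι * η ≤ θ) :
    ∑ i, Real.exp (-truncInfo η (p i)) ≤ Real.exp θ :=
  calc ∑ i, Real.exp (-truncInfo η (p i)) ≤ ∑ i, (p i + η) :=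
        Finset.sum_le_sum fun i _ => exp_neg_truncInfo_le hη (hp i)
    _ = ∑ i, p i + Fintype.card ι * η := by simp [Finset.sum_add_distrib]
    _ ≤ θ + 1 := by linarith
    _ ≤ Real.exp θ := Real.add_one_le_exp θ

end TruncatedInformation

section AverageCost

theorem lowerSemicontinuous_measureReal_of_isOpen [TopologicalSpace X] [MeasurableSpace X]
    [OpensMeasurableSpace X] [HasOuterApproxClosed X] {U : Set X} (hU : IsOpen U) :
    LowerSemicontinuous fun ν : ProbabilityMeasure X => (ν : Measure X).real U := by
  intro μ r hr
  have hlsc : LowerSemicontinuousAt (fun ν : ProbabilityMeasure X => (ν : Measure X) U) μ :=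
    lowerSemicontinuousAt_iff_le_liminf.2
      (ProbabilityMeasure.le_liminf_measure_open_of_tendsto tendsto_id hU)
  rcases lt_or_ge r 0 with hneg | hnonneg
  · exact .of_forall fun ν => hneg.trans_le measureReal_nonneg
  · filter_upwards [hlsc _ ((ENNReal.ofReal_lt_iff_lt_toReal hnonneg (measure_ne_top _ _)).2 hr)]
      with ν hν
    exact (ENNReal.ofReal_lt_iff_lt_toReal hnonneg (measure_ne_top _ _)).1 hν

theorem natCast_mul_measureReal_empProb [MeasurableSpace X] (f : X → X) (x : X) (N : ℕ)
    {U : Set X} (hU : MeasurableSet U) :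
    N * (empProb f x N : Measure X).real U =
      ∑ j ∈ Finset.range N, U.indicator (1 : X → ℝ) (f^[j] x) := by
  rcases N.eq_zero_or_pos with rfl | hN
  · simp
  have hemp : (empProb f x N : Measure X) =
      (N : ℝ≥0∞)⁻¹ • ∑ j ∈ Finset.range N, Measure.dirac (f^[j] x) := by
    change empMeasure f x N = _
    rw [empMeasure, max_eq_left hN]
  have hdirac (j : ℕ) : (Measure.dirac (f^[j] x)).real U = U.indicator (1 : X → ℝ) (f^[j] x) := by
    by_cases h : f^[j] x ∈ U <;> simp [measureReal_def, Measure.dirac_apply' _ hU, h]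
  have hN0 : (N : ℝ) ≠ 0 := by positivity
  rw [hemp, measureReal_ennreal_smul_apply, measureReal_def, Measure.finsetSum_apply,
    ENNReal.toReal_sum fun j _ => measure_ne_top _ _]
  simp only [← measureReal_def, hdirac, ENNReal.toReal_inv, ENNReal.toReal_natCast,
    mul_inv_cancel_left₀ hN0]

variable {κ : Type*} {f : X → X} {l : X → ι ⊕ κ} {U : ι → Set X} {n : ℕ}

theorem itinerary_eq_inl_of_mem_cylinder (hl : ∀ i, ∀ x ∈ U i, l x = .inl i) {v : Fin n → ι}
    {x : X} (hx : x ∈ cylinder f U v) : itinerary f l n x = Sum.inl ∘ v :=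
  funext fun j => hl _ _ (mem_cylinder.1 hx j)

variable [Fintype ι] {c : (Fin n → ι ⊕ κ) → ℝ} {M : ℝ}

theorem cost_itinerary_le (hl : ∀ i, ∀ x ∈ U i, l x = .inl i) (hcM : ∀ w, c w ≤ M) (x : X) :
    c (itinerary f l n x) ≤
      M - ∑ v : Fin n → ι, (M - c (Sum.inl ∘ v)) * (cylinder f U v).indicator 1 x := by
  classical
  by_cases hx : ∃ v : Fin n → ι, x ∈ cylinder f U v
  · obtain ⟨v, hv⟩ := hx
    have hv_unique (w : Fin n → ι) (hwv : w ≠ v) : x ∉ cylinder f U w := fun hw =>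
      hwv (Sum.inl_injective.comp_left ((itinerary_eq_inl_of_mem_cylinder hl hw).symm.trans
        (itinerary_eq_inl_of_mem_cylinder hl hv)))
    rw [Fintype.sum_eq_single v fun w hw => by simp [hv_unique w hw],
      itinerary_eq_inl_of_mem_cylinder hl hv]
    simp [hv]
  · push Not at hx
    simpa [hx] using hcM _

theorem sum_cost_itinerary_le [MeasurableSpace X] (hf : Measurable f)
    (hU : ∀ i, MeasurableSet (U i)) (hl : ∀ i, ∀ x ∈ U i, l x = .inl i) (hcM : ∀ w, c w ≤ M)
    (x : X) (N : ℕ) :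
    ∑ j ∈ Finset.range N, c (itinerary f l n (f^[j] x)) ≤
      N * (M - ∑ v : Fin n → ι,
        (M - c (Sum.inl ∘ v)) * (empProb f x N : Measure X).real (cylinder f U v)) :=
  calc ∑ j ∈ Finset.range N, c (itinerary f l n (f^[j] x))
      ≤ ∑ j ∈ Finset.range N, (M - ∑ v : Fin n → ι,
          (M - c (Sum.inl ∘ v)) * (cylinder f U v).indicator 1 (f^[j] x)) :=
        Finset.sum_le_sum fun j _ => cost_itinerary_le hl hcM _
    _ = N * M - ∑ v : Fin n → ι, (M - c (Sum.inl ∘ v)) *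
          ∑ j ∈ Finset.range N, (cylinder f U v).indicator 1 (f^[j] x) := by
        rw [Finset.sum_sub_distrib, Finset.sum_comm]
        simp [Finset.mul_sum]
    _ = _ := by
        simp only [← natCast_mul_measureReal_empProb f x N (measurableSet_cylinder hf hU _),
          mul_sub, Finset.mul_sum, mul_left_comm (N : ℝ)]

/-- The average cost is dominated by an upper semicontinuous function of the empirical measure,
because the measure of an open set is lower semicontinuous. -/
theorem exists_isOpen_forall_sum_cost_le [TopologicalSpace X] [MeasurableSpace X]
    [BorelSpace X] [HasOuterApproxClosed X] (hf : Continuous f) (hU : ∀ i, IsOpen (U i))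
    (hl : ∀ i, ∀ x ∈ U i, l x = .inl i) (hcM : ∀ w, c w ≤ M)
    {μ : ProbabilityMeasure X} {a : ℝ}
    (ha : M - ∑ v : Fin n → ι, (M - c (Sum.inl ∘ v)) * (μ : Measure X).real (cylinder f U v) < a) :
    ∃ F : Set (ProbabilityMeasure X), IsOpen F ∧ μ ∈ F ∧ ∀ x N, empProb f x N ∈ F →
      ∑ j ∈ Finset.range N, c (itinerary f l n (f^[j] x)) ≤ N * a := by
  have hlsc : LowerSemicontinuous fun ν : ProbabilityMeasure X =>
      ∑ v : Fin n → ι, (M - c (Sum.inl ∘ v)) * (ν : Measure X).real (cylinder f U v) :=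
    lowerSemicontinuous_sum fun v _ =>
      (continuous_const_mul (M - c (Sum.inl ∘ v))).comp_lowerSemicontinuous
        (lowerSemicontinuous_measureReal_of_isOpen (isOpen_cylinder hf hU v))
        (monotone_mul_left_of_nonneg (sub_nonneg.2 (hcM _)))
  refine ⟨_, hlsc.isOpen_preimage (M - a), sub_lt_comm.1 ha, fun x N hx => ?_⟩
  refine (sum_cost_itinerary_le hf.measurable (fun i => (hU i).measurableSet) hl hcM x N).trans ?_
  have := mem_Ioi.1 (mem_preimage.1 hx)
  gcongr
  linarith

theorem sub_sum_mul_measureReal_cylinder_le [MeasurableSpace X] {μ : Measure X}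
    [IsProbabilityMeasure μ] (hf : MeasurePreserving f μ μ) {C S : ι → Set X}
    (hC : ∀ i, MeasurableSet (C i)) (hCS : ∀ i, C i ⊆ S i) (hCU : ∀ i, C i ⊆ U i)
    {b : (Fin n → ι) → ℝ} (hb : ∀ v, 0 ≤ b v) (hbM : ∀ v, b v ≤ M) (hM : 0 ≤ M) :
    M - ∑ v, (M - b v) * μ.real (cylinder f U v) ≤
      M * (n * μ.real (⋃ i, C i)ᶜ) + ∑ v, b v * μ.real (cylinder f S v) :=
  calc M - ∑ v, (M - b v) * μ.real (cylinder f U v)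
      ≤ M - ∑ v, (M - b v) * μ.real (cylinder f C v) := by
        gcongr with v
        · exact sub_nonneg.2 (hbM v)
        · finiteness
        · exact cylinder_mono hCU v
    _ = M * (1 - ∑ v : Fin n → ι, μ.real (cylinder f C v)) +
          ∑ v, b v * μ.real (cylinder f C v) := by
        simp only [sub_mul, Finset.sum_sub_distrib, ← Finset.mul_sum]
        ring
    _ ≤ M * (n * μ.real (⋃ i, C i)ᶜ) + ∑ v, b v * μ.real (cylinder f S v) := by
        gcongr with v
        · exact one_sub_sum_measureReal_cylinder_le hf hC n
        · exact hb v
        · finiteness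
        · exact cylinder_mono hCS v

end AverageCost

section LocalEstimate

/-- The cost of a word over `P` is its truncated information content; the words that use one of
the additional labels are given probability zero. -/
theorem IsPartition.exists_cost [MeasurableSpace X] {μ : Measure X} [IsProbabilityMeasure μ]
    {P : Finset (Set X)} {f : X → X} (hP : IsPartition μ P) (hf : MeasurePreserving f μ μ)
    (κ : Type*) [Fintype κ] (n : ℕ) {θ : ℝ} (hθ : 0 < θ) :
    ∃ (c : (Fin n → P ⊕ κ) → ℝ) (M : ℝ), 0 ≤ M ∧ (∀ w, 0 ≤ c w) ∧ (∀ w, c w ≤ M) ∧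
      ∑ w, Real.exp (-c w) ≤ Real.exp θ ∧
      ∑ v : Fin n → P, c (Sum.inl ∘ v) * μ.real (cylinder f (↑) v) ≤
        partEnt μ (dynJoin f P n) := by
  let S : P ⊕ κ → Set X := Sum.elim (↑) fun _ => ∅
  have hS : ∀ i, MeasurableSet (S i) := Sum.forall.2 ⟨hP.measurableSet, fun _ => .empty⟩
  have hSdisj : Pairwise (AEDisjoint μ on S) := by
    rintro (A | _) (B | _) hAB
    · exact hP.aedisjoint (Sum.inl_injective.ne_iff.1 hAB)
    all_goals simp [S, AEDisjoint, onFun]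
  obtain ⟨η₀, hη₀, hη₀θ⟩ := exists_pos_mul_lt hθ (Fintype.card (Fin n → P ⊕ κ) : ℝ)
  let η := min η₀ 1
  have hη : 0 < η := lt_min hη₀ one_pos
  have hηθ : Fintype.card (Fin n → P ⊕ κ) * η ≤ θ :=
    (mul_le_mul_of_nonneg_left (min_le_left _ _) (Nat.cast_nonneg _)).trans hη₀θ.le
  refine ⟨fun w => truncInfo η (μ.real (cylinder f S w)), -Real.log η,
    neg_nonneg.2 (Real.log_nonpos hη.le (min_le_right _ _)),
    fun w => truncInfo_nonneg hη (min_le_right _ _) measureReal_le_one,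
    fun w => truncInfo_le hη _, ?_, ?_⟩
  · exact sum_exp_neg_truncInfo_le (fun w => measureReal_nonneg)
      (sum_measureReal_cylinder_le_one hf.quasiMeasurePreserving hS hSdisj) hη hηθ
  · rw [partEnt_dynJoin hf.quasiMeasurePreserving hP]
    exact Finset.sum_le_sum fun v _ => truncInfo_mul_le_negMulLog measureReal_nonneg η

variable [PseudoMetricSpace X] [CompactSpace X] [MeasurableSpace X] [BorelSpace X] {μ : Measure X}
  {P : Finset (Set X)} {ε : ℝ}

theorem IsPartition.exists_isClosed_isOpen [IsFiniteMeasure μ] (hP : IsPartition μ P)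
    (hdiam : partDiamLt P ε) {τ : ℝ} (hτ : 0 < τ) :
    ∃ C U : P → Set X, (∀ A, IsClosed (C A)) ∧ (∀ A, IsOpen (U A)) ∧ (∀ A, C A ⊆ A) ∧
      (∀ A, C A ⊆ U A) ∧ Pairwise (Disjoint on U) ∧ (∀ A, ∀ x ∈ U A, ∀ y ∈ U A, dist x y < ε) ∧
      μ.real (⋃ A, C A)ᶜ < τ := by
  obtain ⟨C, hC, hCP, hCdisj, hCτ⟩ := exists_isClosed_pairwise_disjoint_measure_compl_iUnion_lt
    hP.measurableSet hP.aedisjoint hP.measure_compl_iUnion (ENNReal.ofReal_pos.2 hτ).ne'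
  have hCdiam (A : P) : Metric.diam (C A) < ε :=
    (Metric.diam_mono (hCP A) (.all _)).trans_lt (hdiam A A.2)
  obtain ⟨U, hU, hCU, hUdisj, hUε⟩ := exists_isOpen_pairwise_disjoint_dist_lt hC hCdisj hCdiam
  exact ⟨C, U, hC, hU, hCP, hCU, hUdisj, hUε, ENNReal.toReal_lt_of_lt_ofReal hCτ⟩

theorem IsPartition.exists_isFineLabelling_cost {f : X → X} (hf : Continuous f)
    {μ : ProbabilityMeasure X} (hμ : InvariantProb f μ) (hP : IsPartition (μ : Measure X) P)
    (hdiam : partDiamLt P ε) (hε : 0 < ε) {n : ℕ} {a θ : ℝ}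
    (ha : partEnt (μ : Measure X) (dynJoin f P n) < a) (hθ : 0 < θ) :
    ∃ (T : Finset X) (l : X → P ⊕ T) (c : (Fin n → P ⊕ T) → ℝ) (F : Set (ProbabilityMeasure X)),
      IsFineLabelling ε l ∧ (∀ w, 0 ≤ c w) ∧ ∑ w, Real.exp (-c w) ≤ Real.exp θ ∧
      IsOpen F ∧ μ ∈ F ∧ ∀ x N, empProb f x N ∈ F →
        ∑ j ∈ Finset.range N, c (itinerary f l n (f^[j] x)) ≤ N * a := by
  have hfμ : MeasurePreserving f (μ : Measure X) μ := ⟨hf.measurable, hμ⟩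
  obtain ⟨k, hk⟩ := exists_simpleFunc_isFineLabelling (X := X) hε
  obtain ⟨c, M, hM, hc, hcM, hcθ, hcP⟩ := hP.exists_cost hfμ k.range n hθ
  obtain ⟨τ, hτ, hMτ⟩ := exists_pos_mul_lt (sub_pos.2 ha) (M * n)
  obtain ⟨C, U, hC, hU, hCP, hCU, hUdisj, hUε, hCτ⟩ := hP.exists_isClosed_isOpen hdiam hτ
  have hk' : IsFineLabelling ε fun x => (⟨k x, k.mem_range_self x⟩ : k.range) :=
    fun x y hxy => hk (congrArg Subtype.val hxy)
  obtain ⟨l, hl, hlU⟩ := exists_isFineLabelling_sum hUdisj hUε hk'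
  have hlt : M - ∑ v : Fin n → P, (M - c (Sum.inl ∘ v)) *
      (μ : Measure X).real (cylinder f U v) < a :=
    calc _ ≤ M * (n * (μ : Measure X).real (⋃ A, C A)ᶜ) +
          ∑ v : Fin n → P, c (Sum.inl ∘ v) * (μ : Measure X).real (cylinder f (↑) v) :=
          sub_sum_mul_measureReal_cylinder_le hfμ (fun A => (hC A).measurableSet) hCP hCU
            (fun v => hc _) (fun v => hcM _) hM
      _ ≤ M * (n * τ) + partEnt (μ : Measure X) (dynJoin f P n) := by gcongr
      _ < a := by rw [← mul_assoc]; linarith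
  obtain ⟨F, hF, hμF, hFc⟩ := exists_isOpen_forall_sum_cost_le hf hU hlU hcM hlt
  exact ⟨k.range, l, c, F, hl, hc, hcθ, hF, hμF, hFc⟩

theorem exists_isOpen_mBLim_frequently_eq_zero {f : X → X} (hf : Continuous f)
    {μ : ProbabilityMeasure X} (hμ : InvariantProb f μ) (hε : 0 < ε) {s : ℝ}
    (hs : infEnt (μ : Measure X) f ε < s) :
    ∃ F : Set (ProbabilityMeasure X), IsOpen F ∧ μ ∈ F ∧
      mBLim f {x | ∃ᶠ N in atTop, empProb f x N ∈ F} s ε = 0 := by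
  have hfμ : Measure.QuasiMeasurePreserving f (μ : Measure X) μ :=
    ⟨hf.measurable, hμ.absolutelyContinuous⟩
  obtain ⟨r, hr, hrs⟩ := exists_between hs
  obtain ⟨θ, hθ, hrθ⟩ : ∃ θ > 0, r + θ < s := ⟨(s - r) / 2, by linarith, by linarith⟩
  obtain ⟨P, hP, hdiam, hPr⟩ := exists_dynEnt_lt_of_infEnt_lt hε hr
  obtain ⟨n, hn, hnr⟩ := exists_partEnt_dynJoin_lt_of_dynEnt_lt hfμ hP hPr
  obtain ⟨T, l, c, F, hl, hc, hcθ, hF, hμF, hFc⟩ :=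
    hP.exists_isFineLabelling_cost hf hμ hdiam hε hnr hθ
  choose E hcard hE using fun N => exists_finset_bowenBall_cover (f := f) hl hn hcθ hc hθ.le N r
  refine ⟨F, hF, hμF, mBLim_eq_zero_of_frequently_mem_bowenBall
    (tsum_natCast_mul_exp_ne_top hrθ hcard) fun x hx => hx.mono fun N hN => ?_⟩
  exact hE N x (hFc x N hN)

end LocalEstimate

end MMD

theorem stmt12_general {X : Type*} [MetricSpace X] [CompactSpace X] [MeasurableSpace X]
    [BorelSpace X] (f : X → X) (hf : Continuous f) (K : Set (ProbabilityMeasure X))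
    (hKsub : K ⊆ invSet f) (ε : ℝ) (hε : 0 < ε) :
    hB f {x : X | (Vf f x ∩ K).Nonempty} ε ≤
      sSup ((fun ν : ProbabilityMeasure X => infEnt (ν : Measure X) f ε) '' K) := by
  refine hB_le_of_forall_gt (Real.sSup_nonneg (forall_mem_image.2 fun μ hμ => ?_)) fun s hs => ?_
  · exact infEnt_nonneg ⟨hf.measurable, (hKsub hμ).absolutelyContinuous⟩ ε
  have hlocal (μ : ProbabilityMeasure X) (hμ : μ ∈ K) :=
    exists_isOpen_mBLim_frequently_eq_zero hf (hKsub hμ) hε <|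
      (le_csSup (bddAbove_infEnt hf.measurable hKsub hε) (mem_image_of_mem _ hμ)).trans_lt hs
  choose! F hF hμF hFzero using hlocal
  obtain ⟨t, htK, htcountable, hKt⟩ := TopologicalSpace.countable_cover_nhdsWithin
    fun μ hμ => mem_nhdsWithin_of_mem_nhds ((hF μ hμ).mem_nhds (hμF μ hμ))
  refine mBLim_eq_zero_of_subset_biUnion htcountable (fun μ hμ => hFzero μ (htK hμ)) ?_
  rintro x ⟨ν, hνx, hνK⟩
  obtain ⟨μ, hμt, hνμ⟩ := mem_iUnion₂.1 (hKt hνK)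
  exact mem_iUnion₂.2 ⟨μ, hμt, hνx.frequently ((hF μ (htK hμt)).mem_nhds hνμ)⟩

theorem stmt12 {X : Type*} [MetricSpace X] [CompactSpace X] [Nonempty X]
    [MeasurableSpace X] [BorelSpace X]
    (f : X → X) (hf : Continuous f)
    (K : Set (ProbabilityMeasure X)) (hKclosed : IsClosed K) (hKsub : K ⊆ invSet f)
    (ε : ℝ) (hε : 0 < ε) :
    hB f {x : X | (Vf f x ∩ K).Nonempty} ε ≤
      sSup ((fun ν : ProbabilityMeasure X => infEnt (ν : Measure X) f ε) '' K) :=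
  stmt12_general f hf K hKsub ε hε

end
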